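/- arXiv:1908.04544 — 3 statements merged into one kernel-verified Lean document; each statement's English description precedes it below -/
import Mathlib

section
/- A symmetric bilinear form B on 𝔤 = sp(2,ℝ) satisfies (i) B(x,y) = 0 whenever x ∈ span(e₈,e₉,e₁₀), and (ii) B([z,x],y) + B(x,[z,y]) = 0 for all z ∈ span(e₈,e₉,e₁₀) and all x,y ∈ 𝔤, if and only if there exist real constants g₂₂, g₂₄, g₄₄, g₃₅, g₂₆, g₄₆, g₆₆ such that B = g₂₂(e²)² + 2g₂₄ e²⊙e⁴ + g₄₄(e⁴)² + 2g₃₅(e³⊙e⁵ − e¹⊙e⁷) + 2g₂₆ e²⊙e⁶ + 2g₄₆ e⁴⊙e⁶ + g₆₆(e⁶)². In particular, the space of such forms is 7-dimensional. -/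
/-!
STATEMENT 9 (Proposition 1 of the paper): a symmetric bilinear form B on 𝔤 = sp(2,ℝ)
vanishes on span(e₈,e₉,e₁₀) and is infinitesimally invariant along it iff it is of the
form g₂₂(e²)² + 2g₂₄e²⊙e⁴ + g₄₄(e⁴)² + 2g₃₅(e³⊙e⁵ − e¹⊙e⁷) + 2g₂₆e²⊙e⁶ + 2g₄₆e⁴⊙e⁶
+ g₆₆(e⁶)²; the space of such forms is 7-dimensional.
Here e₁=E₂, e₂=E₃, e₃=E₄, e₄=E₆, e₅=E₇, e₆=E₈, e₇=E₉, e₈=E₁, e₉=E₅, e₁₀=E₁₀ (0-based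
`eSp i` = e_{i+1}), `ε` is the dual basis (e^I), and α⊙β is the symmetric product.
-/

noncomputable section
open Matrix
attribute [local instance 100] LieRing.ofAssociativeRing

/-- The matrix `J` defining `sp(2,ℝ)`. -/
def Jm : Matrix (Fin 4) (Fin 4) ℝ :=
  !![0, 0, 0, 1;
     0, 0, 1, 0;
     0, -1, 0, 0;
     -1, 0, 0, 0]

/-- The general element `E(a₁,…,a₁₀)` of `sp(2,ℝ)` (indices shifted: `a i` is `a_{i+1}`). -/
def Emat (a : Fin 10 → ℝ) : Matrix (Fin 4) (Fin 4) ℝ :=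
  !![a 4, a 6, a 8, 2 * a 9;
     -(a 3), a 5, a 7, a 8;
     a 1, a 2, -(a 5), -(a 6);
     -(2 * a 0), a 1, a 3, -(a 4)]

/-- The basis `E_{i+1} = E(0,…,1,…,0)` of `sp(2,ℝ)`. -/
def E (i : Fin 10) : Matrix (Fin 4) (Fin 4) ℝ := Emat (Pi.single i 1)

set_option maxHeartbeats 1000000 in
lemma Emat_rel (a : Fin 10 → ℝ) : (Emat a)ᵀ * Jm + Jm * Emat a = 0 := by
  rw [Emat, Jm]
  ext i j
  fin_cases i <;> fin_cases j <;>
    simp [Matrix.mul_apply, Fin.sum_univ_four, Matrix.transpose_apply,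
      Matrix.vecHead, Matrix.vecTail]

/-- `sp(2,ℝ)` as a Lie subalgebra of `gl(4,ℝ)` (with the commutator bracket). -/
def sp2 : LieSubalgebra ℝ (Matrix (Fin 4) (Fin 4) ℝ) where
  carrier := {X | Xᵀ * Jm + Jm * X = 0}
  zero_mem' := by simp
  add_mem' := by
    intro x y hx hy
    simp only [Set.mem_setOf_eq] at *
    rw [transpose_add, add_mul, mul_add]
    calc xᵀ * Jm + yᵀ * Jm + (Jm * x + Jm * y)
        = (xᵀ * Jm + Jm * x) + (yᵀ * Jm + Jm * y) := by abel
      _ = 0 := by rw [hx, hy, add_zero]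
  smul_mem' := by
    intro c x hx
    simp only [Set.mem_setOf_eq] at *
    rw [transpose_smul, smul_mul_assoc, mul_smul_comm, ← smul_add, hx, smul_zero]
  lie_mem' := by
    intro x y hx hy
    simp only [Set.mem_setOf_eq] at *
    have hx' : xᵀ * Jm = -(Jm * x) := eq_neg_of_add_eq_zero_left hx
    have hy' : yᵀ * Jm = -(Jm * y) := eq_neg_of_add_eq_zero_left hy
    have h1 : yᵀ * xᵀ * Jm = Jm * (y * x) := by
      rw [mul_assoc, hx', mul_neg, ← mul_assoc, hy', neg_mul, neg_neg, mul_assoc]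
    have h2 : xᵀ * yᵀ * Jm = Jm * (x * y) := by
      rw [mul_assoc, hy', mul_neg, ← mul_assoc, hx', neg_mul, neg_neg, mul_assoc]
    rw [Ring.lie_def, transpose_sub, transpose_mul, transpose_mul, sub_mul, mul_sub, h1, h2]
    abel

lemma E_mem (i : Fin 10) : E i ∈ sp2 := Emat_rel _

/-- The basis vectors `E_I` as elements of `sp(2,ℝ)`. -/
def Esp (i : Fin 10) : sp2 := ⟨E i, E_mem i⟩

/-- The basis (e_I) (0-based) of sp(2,ℝ). -/
def eSp : Fin 10 → sp2 :=
  ![Esp 1, Esp 2, Esp 3, Esp 5, Esp 6, Esp 7, Esp 8, Esp 0, Esp 4, Esp 9]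

/-- The symmetric product of two 1-forms, evaluated on a pair of vectors:
(α⊙β)(X,Y) = (α(X)β(Y) + α(Y)β(X))/2. -/
def sprod (α β : sp2 →ₗ[ℝ] ℝ) (X Y : sp2) : ℝ := (α X * β Y + α Y * β X) / 2

/-- span(e₈,e₉,e₁₀) = span(E₁,E₅,E₁₀), i.e. sl(2,ℝ)_l, inside the matrices. -/
def spanL : Submodule ℝ (Matrix (Fin 4) (Fin 4) ℝ) := Submodule.span ℝ {E 0, E 4, E 9}

lemma aux_entries (X : sp2) : (X : Matrix (Fin 4) (Fin 4) ℝ) =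
    Emat ![-(X.1 3 0) / 2, X.1 2 0, X.1 2 1, X.1 3 2, X.1 0 0, X.1 1 1, X.1 0 1, X.1 1 2,
      X.1 0 2, X.1 0 3 / 2] := by
  have h : X.1ᵀ * Jm + Jm * X.1 = 0 := X.2
  have h' : ∀ i j, (X.1ᵀ * Jm + Jm * X.1) i j = 0 := by intro i j; rw [h]; rfl
  have h01 := h' 0 1
  have h02 := h' 0 2
  have h03 := h' 0 3
  have h12 := h' 1 2
  have h13 := h' 1 3
  have h23 := h' 2 3
  simp [Jm, Matrix.mul_apply, Matrix.vecMul, dotProduct, Fin.sum_univ_four] at h01 h02 h03 h12 h13 h23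
  ext i j
  fin_cases i <;> fin_cases j <;> simp [Emat] <;> linarith

lemma aux_decomp (X : sp2) : X =
    X.1 2 0 • eSp 0 + X.1 2 1 • eSp 1 + X.1 3 2 • eSp 2 + X.1 1 1 • eSp 3 + X.1 0 1 • eSp 4
    + X.1 1 2 • eSp 5 + X.1 0 2 • eSp 6 + (-(X.1 3 0) / 2) • eSp 7 + X.1 0 0 • eSp 8
    + (X.1 0 3 / 2) • eSp 9 := by
  apply Subtype.ext
  conv_lhs => rw [aux_entries X]
  ext i j
  fin_cases i <;> fin_cases j <;> simp [Emat, eSp, Esp, E] <;> ring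

lemma aux_spanL {x : Matrix (Fin 4) (Fin 4) ℝ} (hx : x ∈ spanL) :
    ∃ a b c : ℝ, x = Emat ![a, 0, 0, 0, b, 0, 0, 0, 0, c] := by
  rw [spanL, Submodule.mem_span_triple] at hx
  obtain ⟨a, b, c, rfl⟩ := hx
  refine ⟨a, b, c, ?_⟩
  ext i j
  fin_cases i <;> fin_cases j <;> simp [Emat, E, Pi.single_apply] <;> ring

lemma aux_lie (i j : Fin 10) (Z : sp2) (h : E i * E j - E j * E i = Z.1) :
    ⁅Esp i, Esp j⁆ = Z := Subtype.ext h

lemma aux_eps (ε : Fin 10 → (sp2 →ₗ[ℝ] ℝ))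
    (hdual : ∀ i j : Fin 10, ε i (eSp j) = if i = j then 1 else 0) (X : sp2) :
    ε 0 X = X.1 2 0 ∧ ε 1 X = X.1 2 1 ∧ ε 2 X = X.1 3 2 ∧ ε 3 X = X.1 1 1 ∧
    ε 4 X = X.1 0 1 ∧ ε 5 X = X.1 1 2 ∧ ε 6 X = X.1 0 2 := by
  have h := aux_decomp X
  refine ⟨?_, ?_, ?_, ?_, ?_, ?_, ?_⟩ <;>
  · conv_lhs => rw [h]
    simp only [map_add, map_smul, hdual]
    simp

set_option maxHeartbeats 4000000 in
lemma aux_lieE4 : ⁅eSp 8, eSp 0⁆ = - eSp 0 ∧ ⁅eSp 8, eSp 1⁆ = 0 ∧ ⁅eSp 8, eSp 2⁆ = - eSp 2 ∧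
    ⁅eSp 8, eSp 3⁆ = 0 ∧ ⁅eSp 8, eSp 4⁆ = eSp 4 ∧ ⁅eSp 8, eSp 5⁆ = 0 ∧
    ⁅eSp 8, eSp 6⁆ = eSp 6 ∧ ⁅eSp 7, eSp 4⁆ = (-2 : ℝ) • eSp 0 ∧
    ⁅eSp 7, eSp 6⁆ = (-2 : ℝ) • eSp 2 := by
  refine ⟨?_, ?_, ?_, ?_, ?_, ?_, ?_, ?_, ?_⟩ <;>
  · refine aux_lie _ _ _ ?_
    ext i j
    fin_cases i <;> fin_cases j <;>
      simp [Emat, eSp, Esp, E, Pi.single_apply, Matrix.mul_apply, Fin.sum_univ_four]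

lemma aux_mem7 : (eSp 7 : Matrix (Fin 4) (Fin 4) ℝ) ∈ spanL :=
  Submodule.subset_span (by simp [eSp, Esp])
lemma aux_mem8 : (eSp 8 : Matrix (Fin 4) (Fin 4) ℝ) ∈ spanL :=
  Submodule.subset_span (by simp [eSp, Esp])
lemma aux_mem9 : (eSp 9 : Matrix (Fin 4) (Fin 4) ℝ) ∈ spanL :=
  Submodule.subset_span (by simp [eSp, Esp])

/-- the symmetric product as a bilinear map -/
def Tb (α β : sp2 →ₗ[ℝ] ℝ) : sp2 →ₗ[ℝ] sp2 →ₗ[ℝ] ℝ :=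
  (1 / 2 : ℝ) • (α.smulRight β + β.smulRight α)

lemma Tb_apply (α β : sp2 →ₗ[ℝ] ℝ) (X Y : sp2) : Tb α β X Y = sprod α β X Y := by
  simp [Tb, sprod]; ring

/-- the seven generators -/
def gens (ε : Fin 10 → (sp2 →ₗ[ℝ] ℝ)) : Fin 7 → (sp2 →ₗ[ℝ] sp2 →ₗ[ℝ] ℝ) :=
  ![Tb (ε 1) (ε 1), (2 : ℝ) • Tb (ε 1) (ε 3), Tb (ε 3) (ε 3),
    (2 : ℝ) • (Tb (ε 2) (ε 4) - Tb (ε 0) (ε 6)), (2 : ℝ) • Tb (ε 1) (ε 5),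
    (2 : ℝ) • Tb (ε 3) (ε 5), Tb (ε 5) (ε 5)]

lemma gens_apply (ε : Fin 10 → (sp2 →ₗ[ℝ] ℝ)) (c : Fin 7 → ℝ) (X Y : sp2) :
    Fintype.linearCombination ℝ (gens ε) c X Y =
            c 0 * sprod (ε 1) (ε 1) X Y +
            2 * c 1 * sprod (ε 1) (ε 3) X Y +
            c 2 * sprod (ε 3) (ε 3) X Y +
            2 * c 3 * (sprod (ε 2) (ε 4) X Y - sprod (ε 0) (ε 6) X Y) +
            2 * c 4 * sprod (ε 1) (ε 5) X Y +
            2 * c 5 * sprod (ε 3) (ε 5) X Y +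
            c 6 * sprod (ε 5) (ε 5) X Y := by
  simp [Fintype.linearCombination_apply, Fin.sum_univ_seven, gens, Tb_apply]
  ring

lemma gens_inj (ε : Fin 10 → (sp2 →ₗ[ℝ] ℝ))
    (hdual : ∀ i j : Fin 10, ε i (eSp j) = if i = j then 1 else 0) :
    Function.Injective (Fintype.linearCombination ℝ (gens ε)) := by
  rw [injective_iff_map_eq_zero]
  intro c hc
  have h : ∀ X Y, Fintype.linearCombination ℝ (gens ε) c X Y = 0 := by
    intro X Y; rw [hc]; rfl
  simp only [gens_apply] at h
  have h0 := h (eSp 1) (eSp 1)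
  have h1 := h (eSp 1) (eSp 3)
  have h2 := h (eSp 3) (eSp 3)
  have h3 := h (eSp 2) (eSp 4)
  have h4 := h (eSp 1) (eSp 5)
  have h5 := h (eSp 3) (eSp 5)
  have h6 := h (eSp 5) (eSp 5)
  simp [sprod, hdual] at h0 h1 h2 h3 h4 h5 h6
  ext i
  fin_cases i <;> simpa

lemma aux_main (ε : Fin 10 → (sp2 →ₗ[ℝ] ℝ))
    (hdual : ∀ i j : Fin 10, ε i (eSp j) = if i = j then 1 else 0)
    (B : sp2 →ₗ[ℝ] sp2 →ₗ[ℝ] ℝ) (hs : ∀ x y : sp2, B x y = B y x) :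
      (((∀ x y : sp2, (x : Matrix (Fin 4) (Fin 4) ℝ) ∈ spanL → B x y = 0) ∧
        (∀ z x y : sp2, (z : Matrix (Fin 4) (Fin 4) ℝ) ∈ spanL →
          B ⁅z, x⁆ y + B x ⁅z, y⁆ = 0)) ↔
        (∃ g22 g24 g44 g35 g26 g46 g66 : ℝ, ∀ X Y : sp2,
          B X Y =
            g22 * sprod (ε 1) (ε 1) X Y +
            2 * g24 * sprod (ε 1) (ε 3) X Y +
            g44 * sprod (ε 3) (ε 3) X Y +
            2 * g35 * (sprod (ε 2) (ε 4) X Y - sprod (ε 0) (ε 6) X Y) +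
            2 * g26 * sprod (ε 1) (ε 5) X Y +
            2 * g46 * sprod (ε 3) (ε 5) X Y +
            g66 * sprod (ε 5) (ε 5) X Y)) := by
  constructor
  · rintro ⟨h1, h2⟩
    refine ⟨B (eSp 1) (eSp 1), B (eSp 1) (eSp 3), B (eSp 3) (eSp 3), B (eSp 2) (eSp 4),
      B (eSp 1) (eSp 5), B (eSp 3) (eSp 5), B (eSp 5) (eSp 5), ?_⟩
    obtain ⟨l0, l1, l2, l3, l4, l5, l6, m4, m6⟩ := aux_lieE4
    have z7 : B (eSp 7) = 0 := LinearMap.ext fun y => h1 _ y aux_mem7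
    have z8 : B (eSp 8) = 0 := LinearMap.ext fun y => h1 _ y aux_mem8
    have z9 : B (eSp 9) = 0 := LinearMap.ext fun y => h1 _ y aux_mem9
    have y7 : ∀ x, B x (eSp 7) = 0 := fun x => by rw [hs, z7]; rfl
    have y8 : ∀ x, B x (eSp 8) = 0 := fun x => by rw [hs, z8]; rfl
    have y9 : ∀ x, B x (eSp 9) = 0 := fun x => by rw [hs, z9]; rfl
    have w := fun i j => h2 (eSp 8) (eSp i) (eSp j) aux_mem8
    have w00 := w 0 0
    have w01 := w 0 1
    have w02 := w 0 2
    have w03 := w 0 3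
    have w05 := w 0 5
    have w12 := w 1 2
    have w14 := w 1 4
    have w16 := w 1 6
    have w22 := w 2 2
    have w23 := w 2 3
    have w25 := w 2 5
    have w34 := w 3 4
    have w36 := w 3 6
    have w44 := w 4 4
    have w45 := w 4 5
    have w46 := w 4 6
    have w56 := w 5 6
    have w66 := w 6 6
    have v := fun i j => h2 (eSp 7) (eSp i) (eSp j) aux_mem7
    have v44 := v 4 4
    have v66 := v 6 6
    have v46 := v 4 6
    clear w v
    simp only [l0, l1, l2, l3, l4, l5, l6, m4, m6, map_neg, map_zero, map_smul,
      LinearMap.neg_apply, LinearMap.zero_apply, LinearMap.smul_apply, smul_eq_mul]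
      at w00 w01 w02 w03 w05 w12 w14 w16 w22 w23 w25 w34 w36 w44 w45 w46 w56 w66 v44 v66 v46
    have s : ∀ i j, B (eSp i) (eSp j) = B (eSp j) (eSp i) := fun i j => hs _ _
    have s04 := s 4 0
    have s26 := s 6 2
    have s24 := s 4 2
    have t00 : B (eSp 0) (eSp 0) = 0 := by linarith
    have t01 : B (eSp 0) (eSp 1) = 0 := by linarith
    have t02 : B (eSp 0) (eSp 2) = 0 := by linarith
    have t03 : B (eSp 0) (eSp 3) = 0 := by linarith
    have t04 : B (eSp 0) (eSp 4) = 0 := by linarith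
    have t05 : B (eSp 0) (eSp 5) = 0 := by linarith
    have t06 : B (eSp 0) (eSp 6) = - B (eSp 2) (eSp 4) := by linarith
    have t12 : B (eSp 1) (eSp 2) = 0 := by linarith
    have t14 : B (eSp 1) (eSp 4) = 0 := by linarith
    have t16 : B (eSp 1) (eSp 6) = 0 := by linarith
    have t22 : B (eSp 2) (eSp 2) = 0 := by linarith
    have t23 : B (eSp 2) (eSp 3) = 0 := by linarith
    have t25 : B (eSp 2) (eSp 5) = 0 := by linarith
    have t26 : B (eSp 2) (eSp 6) = 0 := by linarith
    have t34 : B (eSp 3) (eSp 4) = 0 := by linarith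
    have t36 : B (eSp 3) (eSp 6) = 0 := by linarith
    have t44 : B (eSp 4) (eSp 4) = 0 := by linarith
    have t45 : B (eSp 4) (eSp 5) = 0 := by linarith
    have t46 : B (eSp 4) (eSp 6) = 0 := by linarith
    have t56 : B (eSp 5) (eSp 6) = 0 := by linarith
    have t66 : B (eSp 6) (eSp 6) = 0 := by linarith
    intro X Y
    obtain ⟨x0, x1, x2, x3, x4, x5, x6⟩ := aux_eps ε hdual X
    obtain ⟨u0, u1, u2, u3, u4, u5, u6⟩ := aux_eps ε hdual Y
    simp only [sprod, x0, x1, x2, x3, x4, x5, x6, u0, u1, u2, u3, u4, u5, u6]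
    conv_lhs => rw [aux_decomp X, aux_decomp Y]
    simp only [map_add, map_smul, LinearMap.add_apply, LinearMap.smul_apply, smul_eq_mul,
      z7, z8, z9, y7, y8, y9, LinearMap.zero_apply,
      s 1 0, s 2 0, s 3 0, s 4 0, s 5 0, s 6 0, s 2 1, s 3 1, s 4 1, s 5 1, s 6 1,
      s 3 2, s 4 2, s 5 2, s 6 2, s 4 3, s 5 3, s 6 3, s 5 4, s 6 4, s 6 5,
      t00, t01, t02, t03, t04, t05, t06, t12, t14, t16, t22, t23, t25, t26, t34, t36, t44,
      t45, t46, t56, t66]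
    ring
  · rintro ⟨g22, g24, g44, g35, g26, g46, g66, h⟩
    have h' : ∀ X Y : sp2, B X Y = g22 * (X.1 2 1 * Y.1 2 1)
        + g24 * (X.1 2 1 * Y.1 1 1 + Y.1 2 1 * X.1 1 1) + g44 * (X.1 1 1 * Y.1 1 1)
        + g35 * (X.1 3 2 * Y.1 0 1 + Y.1 3 2 * X.1 0 1
          - (X.1 2 0 * Y.1 0 2 + Y.1 2 0 * X.1 0 2))
        + g26 * (X.1 2 1 * Y.1 1 2 + Y.1 2 1 * X.1 1 2)
        + g46 * (X.1 1 1 * Y.1 1 2 + Y.1 1 1 * X.1 1 2) + g66 * (X.1 1 2 * Y.1 1 2) := by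
      intro X Y
      obtain ⟨x0, x1, x2, x3, x4, x5, x6⟩ := aux_eps ε hdual X
      obtain ⟨u0, u1, u2, u3, u4, u5, u6⟩ := aux_eps ε hdual Y
      rw [h]
      simp only [sprod, x0, x1, x2, x3, x4, x5, x6, u0, u1, u2, u3, u4, u5, u6]
      ring
    constructor
    · intro x y hx
      obtain ⟨a, b, c, hx⟩ := aux_spanL hx
      rw [h', hx]
      simp [Emat]
    · intro z x y hz
      obtain ⟨a, b, c, hz⟩ := aux_spanL hz
      have hb : ∀ w : sp2, (⁅z, w⁆ : sp2).1 = z.1 * w.1 - w.1 * z.1 := fun w => rfl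
      have hE : ∀ w : sp2, ∃ p : Fin 10 → ℝ, w.1 = Emat p := fun w => ⟨_, aux_entries w⟩
      obtain ⟨p, hp⟩ := hE x
      obtain ⟨q, hq⟩ := hE y
      rw [h', h', hb, hb, hz, hp, hq]
      simp [Emat, Matrix.mul_apply, Fin.sum_univ_four]
      ring

theorem statement9 (ε : Fin 10 → (sp2 →ₗ[ℝ] ℝ))
    (hdual : ∀ i j : Fin 10, ε i (eSp j) = if i = j then 1 else 0) :
    -- the equivalence, for any symmetric bilinear form B on 𝔤
    (∀ B : sp2 →ₗ[ℝ] sp2 →ₗ[ℝ] ℝ, (∀ x y : sp2, B x y = B y x) →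
      (((∀ x y : sp2, (x : Matrix (Fin 4) (Fin 4) ℝ) ∈ spanL → B x y = 0) ∧
        (∀ z x y : sp2, (z : Matrix (Fin 4) (Fin 4) ℝ) ∈ spanL →
          B ⁅z, x⁆ y + B x ⁅z, y⁆ = 0)) ↔
        (∃ g22 g24 g44 g35 g26 g46 g66 : ℝ, ∀ X Y : sp2,
          B X Y =
            g22 * sprod (ε 1) (ε 1) X Y +
            2 * g24 * sprod (ε 1) (ε 3) X Y +
            g44 * sprod (ε 3) (ε 3) X Y +
            2 * g35 * (sprod (ε 2) (ε 4) X Y - sprod (ε 0) (ε 6) X Y) +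
            2 * g26 * sprod (ε 1) (ε 5) X Y +
            2 * g46 * sprod (ε 3) (ε 5) X Y +
            g66 * sprod (ε 5) (ε 5) X Y))) ∧
    -- the space of such forms is 7-dimensional
    (∃ W : Submodule ℝ (sp2 →ₗ[ℝ] sp2 →ₗ[ℝ] ℝ),
      (W : Set (sp2 →ₗ[ℝ] sp2 →ₗ[ℝ] ℝ)) =
        {B | (∀ x y : sp2, B x y = B y x) ∧
          (∀ x y : sp2, (x : Matrix (Fin 4) (Fin 4) ℝ) ∈ spanL → B x y = 0) ∧
          (∀ z x y : sp2, (z : Matrix (Fin 4) (Fin 4) ℝ) ∈ spanL →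
            B ⁅z, x⁆ y + B x ⁅z, y⁆ = 0)} ∧
      Module.finrank ℝ W = 7) := by
  refine ⟨fun B hs => aux_main ε hdual B hs,
    LinearMap.range (Fintype.linearCombination ℝ (gens ε)), ?_, ?_⟩
  · ext B
    simp only [SetLike.mem_coe, LinearMap.mem_range, Set.mem_setOf_eq]
    constructor
    · rintro ⟨c, rfl⟩
      have hs : ∀ x y : sp2, Fintype.linearCombination ℝ (gens ε) c x y =
          Fintype.linearCombination ℝ (gens ε) c y x := by
        intro x y
        rw [gens_apply, gens_apply]
        simp only [sprod]
        ring
      exact ⟨hs, (aux_main ε hdual _ hs).2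
        ⟨c 0, c 1, c 2, c 3, c 4, c 5, c 6, fun X Y => gens_apply ε c X Y⟩⟩
    · rintro ⟨hs, h⟩
      obtain ⟨g22, g24, g44, g35, g26, g46, g66, hB⟩ := (aux_main ε hdual B hs).1 h
      refine ⟨![g22, g24, g44, g35, g26, g46, g66], ?_⟩
      refine LinearMap.ext fun X => LinearMap.ext fun Y => ?_
      rw [gens_apply, hB]
      rfl
  · rw [LinearMap.finrank_range_of_inj (gens_inj ε hdual)]
    simp
end
end

section
/- An alternating 3-form φ on 𝔤 = sp(2,ℝ) satisfies (i) φ(x,·,·) = 0 whenever x ∈ span(e₈,e₉,e₁₀), and (ii) φ([z,x],y,w) + φ(x,[z,y],w) + φ(x,y,[z,w]) = 0 for all z ∈ span(e₈,e₉,e₁₀) and all x,y,w ∈ 𝔤, if and only if there exist real constants a, b, f, h, p, q, r, s, t, u such that φ = f e¹²⁵ + a(e²³⁵ − e¹²⁷) + p e¹⁴⁵ + q(e¹⁴⁷ + e³⁴⁵) + s e¹⁵⁶ + t(e³⁵⁶ − e¹⁶⁷) + h e²³⁷ + b e²⁴⁶ + r e³⁴⁷ + u e³⁶⁷. In particular,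 the space of such 3-forms is 10-dimensional. -/
/-!
STATEMENT 10 (Proposition 2 of the paper): an alternating 3-form φ on 𝔤 = sp(2,ℝ)
annihilates span(e₈,e₉,e₁₀) and is infinitesimally invariant along it iff it is of the
form φ = f e¹²⁵ + a(e²³⁵ − e¹²⁷) + p e¹⁴⁵ + q(e¹⁴⁷ + e³⁴⁵) + s e¹⁵⁶ + t(e³⁵⁶ − e¹⁶⁷)
+ h e²³⁷ + b e²⁴⁶ + r e³⁴⁷ + u e³⁶⁷; the space of such 3-forms is 10-dimensional.
Here e₁=E₂, e₂=E₃, e₃=E₄, e₄=E₆, e₅=E₇, e₆=E₈, e₇=E₉, e₈=E₁, e₉=E₅, e₁₀=E₁₀ (0-based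
`eSp i` = e_{i+1}), `ε` is the dual basis (e^I), and e^{μνρ} = e^μ∧e^ν∧e^ρ is the wedge
(shuffle-sum convention), so that e^{μνρ}(X,Y,Z) is the 3×3 determinant `trip` below.
-/

noncomputable section
open Matrix
attribute [local instance 100] LieRing.ofAssociativeRing

/-- The wedge of three 1-forms (shuffle-sum convention), evaluated on a triple:
(α∧β∧γ)(X,Y,Z) = det of the matrix of evaluations. -/
def trip (α β γ : sp2 →ₗ[ℝ] ℝ) (X Y Z : sp2) : ℝ :=
  α X * (β Y * γ Z - β Z * γ Y) - α Y * (β X * γ Z - β Z * γ X)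
    + α Z * (β X * γ Y - β Y * γ X)

set_option linter.unusedSimpArgs false
/-- Coordinates in the basis `eSp`. -/
def co (X : Matrix (Fin 4) (Fin 4) ℝ) : Fin 10 → ℝ :=
  ![X 2 0, X 2 1, X 3 2, X 1 1, X 0 1, X 1 2, X 0 2, -(X 3 0) / 2, X 0 0, X 0 3 / 2]

lemma sp2_rel (X : sp2) : X.1 1 3 = X.1 0 2 ∧ X.1 2 2 = - X.1 1 1 ∧ X.1 2 3 = - X.1 0 1 ∧
    X.1 3 1 = X.1 2 0 ∧ X.1 1 0 = - X.1 3 2 ∧ X.1 3 3 = - X.1 0 0 := by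
  have h : X.1ᵀ * Jm + Jm * X.1 = 0 := X.2
  have h' : ∀ i j, (X.1ᵀ * Jm + Jm * X.1) i j = 0 := by intro i j; rw [h]; rfl
  simp only [Matrix.add_apply, Matrix.mul_apply, Fin.sum_univ_four, Matrix.transpose_apply] at h'
  have a := h' 3 2
  have b := h' 1 2
  have c := h' 1 3
  have d := h' 0 1
  have e := h' 0 2
  have f := h' 0 3
  simp [Jm] at a b c d e f
  refine ⟨?_, ?_, ?_, ?_, ?_, ?_⟩ <;> linarith

lemma co_inj (X Y : sp2) (h : ∀ i, co X.1 i = co Y.1 i) : X = Y := by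
  obtain ⟨h1, h2, h3, h4, h5, h6⟩ := sp2_rel X
  obtain ⟨k1, k2, k3, k4, k5, k6⟩ := sp2_rel Y
  have a0 : X.1 2 0 = Y.1 2 0 := h 0
  have a1 : X.1 2 1 = Y.1 2 1 := h 1
  have a2 : X.1 3 2 = Y.1 3 2 := h 2
  have a3 : X.1 1 1 = Y.1 1 1 := h 3
  have a4 : X.1 0 1 = Y.1 0 1 := h 4
  have a5 : X.1 1 2 = Y.1 1 2 := h 5
  have a6 : X.1 0 2 = Y.1 0 2 := h 6
  have a7 : -(X.1 3 0) / 2 = -(Y.1 3 0) / 2 := h 7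
  have a8 : X.1 0 0 = Y.1 0 0 := h 8
  have a9 : X.1 0 3 / 2 = Y.1 0 3 / 2 := h 9
  apply Subtype.ext
  ext i j
  fin_cases i <;> fin_cases j <;> simp only [Fin.zero_eta, Fin.mk_one, Fin.reduceFinMk] <;> linarith

/-- `co` as a linear map. -/
def coL (i : Fin 10) : sp2 →ₗ[ℝ] ℝ where
  toFun X := co X.1 i
  map_add' X Y := by fin_cases i <;> simp [co] <;> ring
  map_smul' c X := by fin_cases i <;> simp [co] <;> ring

set_option maxHeartbeats 1600000 in
lemma coL_e (i j : Fin 10) : coL i (eSp j) = if i = j then 1 else 0 := by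
  change co (eSp j).1 i = _
  fin_cases j <;> fin_cases i <;> simp [co, eSp, Esp, E, Emat]

lemma expand (X : sp2) : X = ∑ i, coL i X • eSp i := by
  apply co_inj
  intro i
  change coL i X = coL i _
  simp [map_sum, coL_e]

lemma coL_val (X : sp2) (i : Fin 10) : coL i X = co X.1 i := rfl

lemma spanL_co {x : sp2} (hx : x.1 ∈ spanL) :
    coL 0 x = 0 ∧ coL 1 x = 0 ∧ coL 2 x = 0 ∧ coL 3 x = 0 ∧ coL 4 x = 0 ∧ coL 5 x = 0 ∧
      coL 6 x = 0 := by
  unfold spanL at hx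
  rw [Submodule.mem_span_triple] at hx
  obtain ⟨a, b, c, h⟩ := hx
  have : x = a • eSp 7 + b • eSp 8 + c • eSp 9 := Subtype.ext h.symm
  subst this
  simp [coL_e]

lemma coL_lie (z x : sp2) (hz : z.1 ∈ spanL) :
    coL 0 ⁅z, x⁆ = -coL 8 z * coL 0 x - 2 * coL 7 z * coL 4 x ∧
    coL 1 ⁅z, x⁆ = 0 ∧
    coL 2 ⁅z, x⁆ = -coL 8 z * coL 2 x - 2 * coL 7 z * coL 6 x ∧
    coL 3 ⁅z, x⁆ = 0 ∧
    coL 4 ⁅z, x⁆ = coL 8 z * coL 4 x + 2 * coL 9 z * coL 0 x ∧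
    coL 5 ⁅z, x⁆ = 0 ∧
    coL 6 ⁅z, x⁆ = coL 8 z * coL 6 x + 2 * coL 9 z * coL 2 x ∧
    coL 7 ⁅z, x⁆ = 2 * coL 7 z * coL 8 x - 2 * coL 8 z * coL 7 x ∧
    coL 8 ⁅z, x⁆ = -4 * coL 9 z * coL 7 x + 4 * coL 7 z * coL 9 x ∧
    coL 9 ⁅z, x⁆ = 2 * coL 8 z * coL 9 x - 2 * coL 9 z * coL 8 x := by
  obtain ⟨h1, h2, h3, h4, h5, h6⟩ := sp2_rel x
  obtain ⟨k1, k2, k3, k4, k5, k6⟩ := sp2_rel z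
  obtain ⟨a0, a1, a2, a3, a4, a5, a6⟩ := spanL_co hz
  have hl : ∀ i j, ⁅z, x⁆.1 i j = ∑ k, z.1 i k * x.1 k j - ∑ k, x.1 i k * z.1 k j := by
    intro i j; rfl
  simp only [Fin.sum_univ_four] at hl
  change z.1 2 0 = 0 at a0
  change z.1 2 1 = 0 at a1
  change z.1 3 2 = 0 at a2
  change z.1 1 1 = 0 at a3
  change z.1 0 1 = 0 at a4
  change z.1 1 2 = 0 at a5
  change z.1 0 2 = 0 at a6
  have v0 : ∀ y : sp2, coL 0 y = y.1 2 0 := fun _ => rfl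
  have v1 : ∀ y : sp2, coL 1 y = y.1 2 1 := fun _ => rfl
  have v2 : ∀ y : sp2, coL 2 y = y.1 3 2 := fun _ => rfl
  have v3 : ∀ y : sp2, coL 3 y = y.1 1 1 := fun _ => rfl
  have v4 : ∀ y : sp2, coL 4 y = y.1 0 1 := fun _ => rfl
  have v5 : ∀ y : sp2, coL 5 y = y.1 1 2 := fun _ => rfl
  have v6 : ∀ y : sp2, coL 6 y = y.1 0 2 := fun _ => rfl
  have v7 : ∀ y : sp2, coL 7 y = -(y.1 3 0) / 2 := fun _ => rfl
  have v8 : ∀ y : sp2, coL 8 y = y.1 0 0 := fun _ => rfl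
  have v9 : ∀ y : sp2, coL 9 y = y.1 0 3 / 2 := fun _ => rfl
  simp only [v0, v1, v2, v3, v4, v5, v6, v7, v8, v9, hl, h1, h2, h3, h4, h5, h6,
    k1, k2, k3, k4, k5, k6, a0, a1, a2, a3, a4, a5, a6]
  refine ⟨?_, ?_, ?_, ?_, ?_, ?_, ?_, ?_, ?_, ?_⟩ <;> ring

lemma mem7 : (eSp 7).1 ∈ spanL := Submodule.subset_span (by left; rfl)
lemma mem8 : (eSp 8).1 ∈ spanL := Submodule.subset_span (by right; left; rfl)
lemma mem9 : (eSp 9).1 ∈ spanL := Submodule.subset_span (by right; right; rfl)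

lemma coL_inj (X Y : sp2) (h : coL 0 X = coL 0 Y ∧ coL 1 X = coL 1 Y ∧ coL 2 X = coL 2 Y ∧
    coL 3 X = coL 3 Y ∧ coL 4 X = coL 4 Y ∧ coL 5 X = coL 5 Y ∧ coL 6 X = coL 6 Y ∧
    coL 7 X = coL 7 Y ∧ coL 8 X = coL 8 Y ∧ coL 9 X = coL 9 Y) : X = Y := by
  obtain ⟨h0, h1, h2, h3, h4, h5, h6, h7, h8, h9⟩ := h
  apply co_inj
  intro i
  fin_cases i <;> assumption

lemma lie7 : ⁅eSp 7, eSp 4⁆ = (-2 : ℝ) • eSp 0 ∧ ⁅eSp 7, eSp 6⁆ = (-2 : ℝ) • eSp 2 ∧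
    ⁅eSp 7, eSp 1⁆ = 0 ∧ ⁅eSp 7, eSp 3⁆ = 0 ∧ ⁅eSp 7, eSp 5⁆ = 0 := by
  refine ⟨?_, ?_, ?_, ?_, ?_⟩ <;> apply coL_inj <;>
    simp [coL_lie _ _ mem7, coL_e]

/-- Weights of `e₉`. -/
def wt : Fin 10 → ℝ := ![-1, 0, -1, 0, 1, 0, 1, -2, 0, 2]

lemma lie8 (j : Fin 10) : ⁅eSp 8, eSp j⁆ = wt j • eSp j := by
  apply coL_inj
  simp only [coL_lie _ _ mem8, coL_e, map_smul]
  fin_cases j <;> simp [wt]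

/-- The wedge of three linear forms as an alternating map. -/
def tripA (α β γ : sp2 →ₗ[ℝ] ℝ) : AlternatingMap ℝ sp2 ℝ (Fin 3) where
  toFun v := trip α β γ (v 0) (v 1) (v 2)
  map_update_add' := by
    intro inst v i x y
    obtain rfl : inst = instDecidableEqFin 3 := Subsingleton.elim _ _
    fin_cases i <;> simp [trip] <;> ring
  map_update_smul' := by
    intro inst v i c x
    obtain rfl : inst = instDecidableEqFin 3 := Subsingleton.elim _ _
    fin_cases i <;> simp [trip] <;> ring
  map_eq_zero_of_eq' v i j h hij := by
    fin_cases i <;> fin_cases j <;> simp at hij h <;> simp [trip, h] <;> ring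

lemma tripA_apply (α β γ : sp2 →ₗ[ℝ] ℝ) (X Y Z : sp2) :
    tripA α β γ ![X, Y, Z] = trip α β γ X Y Z := rfl

/-- The ten basic invariant forms, in the order `f a p q s t h b r u`. -/
def B : Fin 10 → AlternatingMap ℝ sp2 ℝ (Fin 3) :=
  ![tripA (coL 0) (coL 1) (coL 4),
    tripA (coL 1) (coL 2) (coL 4) - tripA (coL 0) (coL 1) (coL 6),
    tripA (coL 0) (coL 3) (coL 4),
    tripA (coL 0) (coL 3) (coL 6) + tripA (coL 2) (coL 3) (coL 4),
    tripA (coL 0) (coL 4) (coL 5),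
    tripA (coL 2) (coL 4) (coL 5) - tripA (coL 0) (coL 5) (coL 6),
    tripA (coL 1) (coL 2) (coL 6),
    tripA (coL 1) (coL 3) (coL 5),
    tripA (coL 2) (coL 3) (coL 6),
    tripA (coL 2) (coL 5) (coL 6)]

/-- The general form. -/
def gen (a b f h p q r s t u : ℝ) (X Y Z : sp2) : ℝ :=
  f * trip (coL 0) (coL 1) (coL 4) X Y Z +
  a * (trip (coL 1) (coL 2) (coL 4) X Y Z - trip (coL 0) (coL 1) (coL 6) X Y Z) +
  p * trip (coL 0) (coL 3) (coL 4) X Y Z +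
  q * (trip (coL 0) (coL 3) (coL 6) X Y Z + trip (coL 2) (coL 3) (coL 4) X Y Z) +
  s * trip (coL 0) (coL 4) (coL 5) X Y Z +
  t * (trip (coL 2) (coL 4) (coL 5) X Y Z - trip (coL 0) (coL 5) (coL 6) X Y Z) +
  h * trip (coL 1) (coL 2) (coL 6) X Y Z +
  b * trip (coL 1) (coL 3) (coL 5) X Y Z +
  r * trip (coL 2) (coL 3) (coL 6) X Y Z +
  u * trip (coL 2) (coL 5) (coL 6) X Y Z

lemma sum_B_apply (c : Fin 10 → ℝ) (X Y Z : sp2) : (∑ i, c i • B i) ![X, Y, Z] =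
    gen (c 1) (c 7) (c 0) (c 6) (c 2) (c 3) (c 8) (c 4) (c 5) (c 9) X Y Z := by
  simp only [Fin.sum_univ_succ, gen]
  simp [B, tripA_apply]
  ring

lemma gen_inv1 (a b f h p q r s t u : ℝ) (x y z : sp2) (hx : x.1 ∈ spanL) :
    gen a b f h p q r s t u x y z = 0 := by
  obtain ⟨a0, a1, a2, a3, a4, a5, a6⟩ := spanL_co hx
  simp only [gen, trip, a0, a1, a2, a3, a4, a5, a6]
  ring

lemma gen_inv2 (a b f h p q r s t u : ℝ) (z x y w : sp2) (hz : z.1 ∈ spanL) :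
    gen a b f h p q r s t u ⁅z, x⁆ y w + gen a b f h p q r s t u x ⁅z, y⁆ w
      + gen a b f h p q r s t u x y ⁅z, w⁆ = 0 := by
  simp only [gen, trip, coL_lie _ _ hz]
  ring


lemma swap01 (φ : AlternatingMap ℝ sp2 ℝ (Fin 3)) (x y z : sp2) :
    φ ![y, x, z] = - φ ![x, y, z] := by
  have := φ.map_swap ![x, y, z] (i := 0) (j := 1) (by decide)
  rw [← this]
  congr 1
  ext i
  fin_cases i <;> rfl

lemma swap12 (φ : AlternatingMap ℝ sp2 ℝ (Fin 3)) (x y z : sp2) :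
    φ ![x, z, y] = - φ ![x, y, z] := by
  have := φ.map_swap ![x, y, z] (i := 1) (j := 2) (by decide)
  rw [← this]
  congr 1
  ext i
  fin_cases i <;> rfl

lemma rep01 (φ : AlternatingMap ℝ sp2 ℝ (Fin 3)) (x z : sp2) : φ ![x, x, z] = 0 :=
  φ.map_eq_zero_of_eq _ (i := 0) (j := 1) rfl (by decide)

lemma rep12 (φ : AlternatingMap ℝ sp2 ℝ (Fin 3)) (x z : sp2) : φ ![z, x, x] = 0 :=
  φ.map_eq_zero_of_eq _ (i := 1) (j := 2) rfl (by decide)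

lemma smul0 (φ : AlternatingMap ℝ sp2 ℝ (Fin 3)) (c : ℝ) (x y z : sp2) :
    φ ![c • x, y, z] = c * φ ![x, y, z] := by
  have h := φ.map_update_smul ![x, y, z] 0 c x
  have e : ∀ w : sp2, Function.update ![x, y, z] 0 w = ![w, y, z] := by
    intro w; ext i; fin_cases i <;> rfl
  rw [e, e, smul_eq_mul] at h
  exact h

lemma smul1 (φ : AlternatingMap ℝ sp2 ℝ (Fin 3)) (c : ℝ) (x y z : sp2) :
    φ ![x, c • y, z] = c * φ ![x, y, z] := by
  rw [swap01, smul0, swap01]; ring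

lemma smul2 (φ : AlternatingMap ℝ sp2 ℝ (Fin 3)) (c : ℝ) (x y z : sp2) :
    φ ![x, y, c • z] = c * φ ![x, y, z] := by
  rw [swap12, smul1, swap12]; ring

lemma ext_lt (φ : AlternatingMap ℝ sp2 ℝ (Fin 3))
    (H : ∀ i j k : Fin 10, i < j → j < k → φ ![eSp i, eSp j, eSp k] = 0) : φ = 0 := by
  have H2 : ∀ i j k : Fin 10, i < j → φ ![eSp i, eSp j, eSp k] = 0 := by
    intro i j k hij
    rcases lt_trichotomy j k with h | h | h
    · exact H i j k hij h
    · subst h; exact rep12 _ _ _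
    · rcases lt_trichotomy i k with h' | h' | h'
      · rw [swap12, H i k j h' h, neg_zero]
      · subst h'; rw [swap12, rep01, neg_zero]
      · rw [swap12, swap01, H k i j h' hij, neg_zero, neg_zero]
  have H3 : ∀ i j k : Fin 10, φ ![eSp i, eSp j, eSp k] = 0 := by
    intro i j k
    rcases lt_trichotomy i j with h | h | h
    · exact H2 i j k h
    · subst h; exact rep01 _ _ _
    · rw [swap01, H2 j i k h, neg_zero]
  have hsp : ⊤ ≤ Submodule.span ℝ (Set.range eSp) := by
    intro X _
    rw [expand X]
    exact Submodule.sum_mem _ fun i _ => Submodule.smul_mem _ _ (Submodule.subset_span ⟨i, rfl⟩)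
  have hli : LinearIndependent ℝ eSp := by
    rw [Fintype.linearIndependent_iff]
    intro g hg i
    have := congrArg (coL i) hg
    simpa [map_sum, coL_e] using this
  refine Module.Basis.ext_alternating (Module.Basis.mk hli hsp) ?_
  intro v _
  simp only [Module.Basis.mk_apply]
  have := H3 (v 0) (v 1) (v 2)
  rw [AlternatingMap.zero_apply, ← this]
  congr 1
  ext i
  fin_cases i <;> rfl

/-- The invariance conditions. -/
def IsInvL (φ : AlternatingMap ℝ sp2 ℝ (Fin 3)) : Prop :=
  (∀ x y z : sp2, (x : Matrix (Fin 4) (Fin 4) ℝ) ∈ spanL → φ ![x, y, z] = 0) ∧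
  (∀ z x y w : sp2, (z : Matrix (Fin 4) (Fin 4) ℝ) ∈ spanL →
     φ ![⁅z, x⁆, y, w] + φ ![x, ⁅z, y⁆, w] + φ ![x, y, ⁅z, w⁆] = 0)

lemma invL_sum (c : Fin 10 → ℝ) : IsInvL (∑ i, c i • B i) := by
  constructor
  · intro x y z hx
    rw [sum_B_apply]; exact gen_inv1 _ _ _ _ _ _ _ _ _ _ x y z hx
  · intro z x y w hz
    simp only [sum_B_apply]; exact gen_inv2 _ _ _ _ _ _ _ _ _ _ z x y w hz

lemma invL_sub {φ ψ : AlternatingMap ℝ sp2 ℝ (Fin 3)} (h1 : IsInvL φ) (h2 : IsInvL ψ) :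
    IsInvL (φ - ψ) := by
  constructor
  · intro x y z hx
    simp [h1.1 x y z hx, h2.1 x y z hx]
  · intro z x y w hz
    have := h1.2 z x y w hz
    have := h2.2 z x y w hz
    simp only [AlternatingMap.sub_apply]
    linarith

lemma mem_ge (k : Fin 10) (hk : 7 ≤ k) : (eSp k).1 ∈ spanL := by
  have : k = 7 ∨ k = 8 ∨ k = 9 := by omega
  rcases this with rfl | rfl | rfl
  exacts [mem7, mem8, mem9]

lemma invL_zero (φ : AlternatingMap ℝ sp2 ℝ (Fin 3)) (h : IsInvL φ)
    (z0 : φ ![eSp 0, eSp 1, eSp 4] = 0) (z1 : φ ![eSp 1, eSp 2, eSp 4] = 0)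
    (z2 : φ ![eSp 0, eSp 3, eSp 4] = 0) (z3 : φ ![eSp 0, eSp 3, eSp 6] = 0)
    (z4 : φ ![eSp 0, eSp 4, eSp 5] = 0) (z5 : φ ![eSp 2, eSp 4, eSp 5] = 0)
    (z6 : φ ![eSp 1, eSp 2, eSp 6] = 0) (z7 : φ ![eSp 1, eSp 3, eSp 5] = 0)
    (z8 : φ ![eSp 2, eSp 3, eSp 6] = 0) (z9 : φ ![eSp 2, eSp 5, eSp 6] = 0) : φ = 0 := by
  have hw : ∀ i j k : Fin 10, wt i + wt j + wt k ≠ 0 → φ ![eSp i, eSp j, eSp k] = 0 := by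
    intro i j k hne
    have := h.2 (eSp 8) (eSp i) (eSp j) (eSp k) mem8
    rw [lie8, lie8, lie8, smul0, smul1, smul2] at this
    have h' : (wt i + wt j + wt k) * φ ![eSp i, eSp j, eSp k] = 0 := by linarith
    exact (mul_eq_zero.mp h').resolve_left hne
  obtain ⟨l4, l6, l1, l3, l5⟩ := lie7
  have n : ∀ x y : sp2, φ ![x, y, 0] = 0 := fun x y => φ.map_coord_zero (2 : Fin 3) rfl
  have r1 := h.2 (eSp 7) (eSp 4) (eSp 6) (eSp 1) mem7
  have r3 := h.2 (eSp 7) (eSp 4) (eSp 6) (eSp 3) mem7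
  have r5 := h.2 (eSp 7) (eSp 4) (eSp 6) (eSp 5) mem7
  rw [l4, l6, l1, smul0, smul1, n, swap12, swap01 φ (eSp 2), swap12 φ (eSp 2), swap01 φ (eSp 1) (eSp 2),
    z1] at r1
  rw [l4, l6, l3, smul0, smul1, n, swap12, z3, swap01 φ (eSp 2), swap12 φ (eSp 2)] at r3
  rw [l4, l6, l5, smul0, smul1, n, swap12, swap01 φ (eSp 2), z5] at r5
  have y1 : φ ![eSp 0, eSp 1, eSp 6] = 0 := by linarith
  have y3 : φ ![eSp 2, eSp 3, eSp 4] = 0 := by linarith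
  have y5 : φ ![eSp 0, eSp 5, eSp 6] = 0 := by linarith
  apply ext_lt
  intro i j k hij hjk
  by_cases hk : 7 ≤ k
  · rw [swap12, swap01, h.1 _ _ _ (mem_ge k hk), neg_zero, neg_zero]
  by_cases hz : wt i + wt j + wt k = 0
  · have hi : i.val < 7 := by omega
    have hj : j.val < 7 := by omega
    have hk : k.val < 7 := by omega
    obtain ⟨i, _⟩ := i
    obtain ⟨j, _⟩ := j
    obtain ⟨k, _⟩ := k
    simp only [Fin.mk_lt_mk] at hij hjk hi hj hk
    interval_cases k <;> interval_cases j <;> interval_cases i <;>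
      first
      | assumption
      | (exfalso; revert hz; simp [wt]; done)
      | (exfalso; revert hz; simp [wt]; norm_num; done)
  · exact hw i j k hz

lemma invL_iff (φ : AlternatingMap ℝ sp2 ℝ (Fin 3)) :
    IsInvL φ ↔ ∃ c : Fin 10 → ℝ, φ = ∑ i, c i • B i := by
  constructor
  · intro h
    set c : Fin 10 → ℝ := ![φ ![eSp 0, eSp 1, eSp 4], φ ![eSp 1, eSp 2, eSp 4],
      φ ![eSp 0, eSp 3, eSp 4], φ ![eSp 0, eSp 3, eSp 6], φ ![eSp 0, eSp 4, eSp 5],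
      φ ![eSp 2, eSp 4, eSp 5], φ ![eSp 1, eSp 2, eSp 6], φ ![eSp 1, eSp 3, eSp 5],
      φ ![eSp 2, eSp 3, eSp 6], φ ![eSp 2, eSp 5, eSp 6]] with hc
    refine ⟨c, sub_eq_zero.mp (invL_zero _ (invL_sub h (invL_sum c)) ?_ ?_ ?_ ?_ ?_ ?_ ?_ ?_ ?_ ?_)⟩ <;>
      rw [AlternatingMap.sub_apply, sum_B_apply] <;> simp [gen, trip, coL_e, hc]
  · rintro ⟨c, rfl⟩
    exact invL_sum c

lemma B_li : LinearIndependent ℝ B := by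
  rw [Fintype.linearIndependent_iff]
  intro c hc
  have H : ∀ X Y Z, gen (c 1) (c 7) (c 0) (c 6) (c 2) (c 3) (c 8) (c 4) (c 5) (c 9) X Y Z = 0 := by
    intro X Y Z
    rw [← sum_B_apply, hc]; rfl
  have z0 := H (eSp 0) (eSp 1) (eSp 4)
  have z1 := H (eSp 1) (eSp 2) (eSp 4)
  have z2 := H (eSp 0) (eSp 3) (eSp 4)
  have z3 := H (eSp 0) (eSp 3) (eSp 6)
  have z4 := H (eSp 0) (eSp 4) (eSp 5)
  have z5 := H (eSp 2) (eSp 4) (eSp 5)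
  have z6 := H (eSp 1) (eSp 2) (eSp 6)
  have z7 := H (eSp 1) (eSp 3) (eSp 5)
  have z8 := H (eSp 2) (eSp 3) (eSp 6)
  have z9 := H (eSp 2) (eSp 5) (eSp 6)
  simp [gen, trip, coL_e] at z0 z1 z2 z3 z4 z5 z6 z7 z8 z9
  intro i
  fin_cases i <;> assumption

theorem statement10 (ε : Fin 10 → (sp2 →ₗ[ℝ] ℝ))
    (hdual : ∀ i j : Fin 10, ε i (eSp j) = if i = j then 1 else 0) :
    -- the equivalence, for any alternating 3-form φ on 𝔤
    (∀ φ : AlternatingMap ℝ sp2 ℝ (Fin 3),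
      ((∀ x y z : sp2, (x : Matrix (Fin 4) (Fin 4) ℝ) ∈ spanL → φ ![x, y, z] = 0) ∧
       (∀ z x y w : sp2, (z : Matrix (Fin 4) (Fin 4) ℝ) ∈ spanL →
         φ ![⁅z, x⁆, y, w] + φ ![x, ⁅z, y⁆, w] + φ ![x, y, ⁅z, w⁆] = 0)) ↔
      (∃ a b f h p q r s t u : ℝ, ∀ X Y Z : sp2,
        φ ![X, Y, Z] =
          f * trip (ε 0) (ε 1) (ε 4) X Y Z +
          a * (trip (ε 1) (ε 2) (ε 4) X Y Z - trip (ε 0) (ε 1) (ε 6) X Y Z) +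
          p * trip (ε 0) (ε 3) (ε 4) X Y Z +
          q * (trip (ε 0) (ε 3) (ε 6) X Y Z + trip (ε 2) (ε 3) (ε 4) X Y Z) +
          s * trip (ε 0) (ε 4) (ε 5) X Y Z +
          t * (trip (ε 2) (ε 4) (ε 5) X Y Z - trip (ε 0) (ε 5) (ε 6) X Y Z) +
          h * trip (ε 1) (ε 2) (ε 6) X Y Z +
          b * trip (ε 1) (ε 3) (ε 5) X Y Z +
          r * trip (ε 2) (ε 3) (ε 6) X Y Z +
          u * trip (ε 2) (ε 5) (ε 6) X Y Z)) ∧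
    -- the space of such 3-forms is 10-dimensional
    (∃ W : Submodule ℝ (AlternatingMap ℝ sp2 ℝ (Fin 3)),
      (W : Set (AlternatingMap ℝ sp2 ℝ (Fin 3))) =
        {φ | (∀ x y z : sp2, (x : Matrix (Fin 4) (Fin 4) ℝ) ∈ spanL → φ ![x, y, z] = 0) ∧
          (∀ z x y w : sp2, (z : Matrix (Fin 4) (Fin 4) ℝ) ∈ spanL →
            φ ![⁅z, x⁆, y, w] + φ ![x, ⁅z, y⁆, w] + φ ![x, y, ⁅z, w⁆] = 0)} ∧
      Module.finrank ℝ W = 10) := by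
  have hε : ε = coL := by
    funext i
    ext X
    conv_lhs => rw [expand X]
    simp [map_sum, hdual]
  subst hε
  constructor
  · intro φ
    change IsInvL φ ↔ _
    rw [invL_iff]
    constructor
    · rintro ⟨c, rfl⟩
      exact ⟨c 1, c 7, c 0, c 6, c 2, c 3, c 8, c 4, c 5, c 9, fun X Y Z => sum_B_apply c X Y Z⟩
    · rintro ⟨a, b, f, h, p, q, r, s, t, u, H⟩
      refine ⟨![f, a, p, q, s, t, h, b, r, u], ?_⟩
      ext v
      have hv : v = ![v 0, v 1, v 2] := by ext i; fin_cases i <;> rfl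
      rw [hv, H, sum_B_apply]
      rfl
  · refine ⟨Submodule.span ℝ (Set.range B), ?_, ?_⟩
    · ext φ
      change φ ∈ Submodule.span ℝ (Set.range B) ↔ IsInvL φ
      rw [invL_iff, Submodule.mem_span_range_iff_exists_fun]
      exact exists_congr fun c => eq_comm
    · rw [finrank_span_eq_card B_li]; rfl
end
end

section
/- A symmetric bilinear form B on 𝔤 = sp(2,ℝ) satisfies (i) B(x,y) = 0 whenever x ∈ span(f₈,f₉,f₁₀), and (ii) B([z,x],y) + B(x,[z,y]) = 0 for all z ∈ span(f₈,f₉,f₁₀) and all x,y ∈ 𝔤, if and only if there exist real constants g₃₃, g₄₄, g₅₅, g₂₆ such that B = g₃₃((f³)² − 2f¹⊙f⁶) + g₄₄(f⁴)² + g₅₅((f⁵)² + 2f²⊙f⁷) + 2g₂₆(−2f³⊙f⁵ + f²⊙f⁶ − 4f¹⊙f⁷). In particular, the space of such forms is 4-dimensional. -/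
/-!
STATEMENT 16 (Proposition 5 of the paper): a symmetric bilinear form B on 𝔤 = sp(2,ℝ)
vanishes on span(f₈,f₉,f₁₀) and is infinitesimally invariant along it iff it is of the
form g₃₃((f³)² − 2f¹⊙f⁶) + g₄₄(f⁴)² + g₅₅((f⁵)² + 2f²⊙f⁷)
+ 2g₂₆(−2f³⊙f⁵ + f²⊙f⁶ − 4f¹⊙f⁷); the space of such forms is 4-dimensional.
Here f₁=E₁, f₂=E₃, f₃=E₄, f₄=E₆−E₅, f₅=E₇, f₆=E₈, f₇=E₁₀, f₈=E₂, f₉=E₅+E₆, f₁₀=E₉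
(0-based `fSp i` = f_{i+1}), `ε` is the dual basis (f^I), and α⊙β is the symmetric
product.
-/

noncomputable section
open Matrix
attribute [local instance 100] LieRing.ofAssociativeRing

/-- The basis (f_I) (0-based) of sp(2,ℝ). -/
def fSp : Fin 10 → sp2 :=
  ![Esp 0, Esp 2, Esp 3, Esp 5 - Esp 4, Esp 6, Esp 7, Esp 9, Esp 1, Esp 4 + Esp 5, Esp 8]

/-- span(f₈,f₉,f₁₀) = span(E₂, E₅+E₆, E₉), i.e. sl(2,ℝ)_s, inside the matrices. -/
def spanS : Submodule ℝ (Matrix (Fin 4) (Fin 4) ℝ) :=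
  Submodule.span ℝ {E 1, E 4 + E 5, E 8}

set_option linter.unusedSimpArgs false

set_option maxHeartbeats 4000000 in
lemma s16_mats :
    (fSp 0 : Matrix (Fin 4) (Fin 4) ℝ) = !![0, 0, 0, 0; 0, 0, 0, 0; 0, 0, 0, 0; -2, 0, 0, 0] ∧
    (fSp 1 : Matrix (Fin 4) (Fin 4) ℝ) = !![0, 0, 0, 0; 0, 0, 0, 0; 0, 1, 0, 0; 0, 0, 0, 0] ∧
    (fSp 2 : Matrix (Fin 4) (Fin 4) ℝ) = !![0, 0, 0, 0; -1, 0, 0, 0; 0, 0, 0, 0; 0, 0, 1, 0] ∧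
    (fSp 3 : Matrix (Fin 4) (Fin 4) ℝ) = !![-1, 0, 0, 0; 0, 1, 0, 0; 0, 0, -1, 0; 0, 0, 0, 1] ∧
    (fSp 4 : Matrix (Fin 4) (Fin 4) ℝ) = !![0, 1, 0, 0; 0, 0, 0, 0; 0, 0, 0, -1; 0, 0, 0, 0] ∧
    (fSp 5 : Matrix (Fin 4) (Fin 4) ℝ) = !![0, 0, 0, 0; 0, 0, 1, 0; 0, 0, 0, 0; 0, 0, 0, 0] ∧
    (fSp 6 : Matrix (Fin 4) (Fin 4) ℝ) = !![0, 0, 0, 2; 0, 0, 0, 0; 0, 0, 0, 0; 0, 0, 0, 0] ∧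
    (fSp 7 : Matrix (Fin 4) (Fin 4) ℝ) = !![0, 0, 0, 0; 0, 0, 0, 0; 1, 0, 0, 0; 0, 1, 0, 0] ∧
    (fSp 8 : Matrix (Fin 4) (Fin 4) ℝ) = !![1, 0, 0, 0; 0, 1, 0, 0; 0, 0, -1, 0; 0, 0, 0, -1] ∧
    (fSp 9 : Matrix (Fin 4) (Fin 4) ℝ) = !![0, 0, 1, 0; 0, 0, 0, 1; 0, 0, 0, 0; 0, 0, 0, 0] := by
  refine ⟨?_, ?_, ?_, ?_, ?_, ?_, ?_, ?_, ?_, ?_⟩ <;>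
  · ext i j
    fin_cases i <;> fin_cases j <;> simp [fSp, Esp, E, Emat, Pi.single_apply]

lemma s16_mul4 (a00 a01 a02 a03 a10 a11 a12 a13 a20 a21 a22 a23 a30 a31 a32 a33
    b00 b01 b02 b03 b10 b11 b12 b13 b20 b21 b22 b23 b30 b31 b32 b33 : ℝ) :
    !![a00, a01, a02, a03; a10, a11, a12, a13; a20, a21, a22, a23; a30, a31, a32, a33] *
      !![b00, b01, b02, b03; b10, b11, b12, b13; b20, b21, b22, b23; b30, b31, b32, b33] =
    !![a00*b00+a01*b10+a02*b20+a03*b30, a00*b01+a01*b11+a02*b21+a03*b31, a00*b02+a01*b12+a02*b22+a03*b32, a00*b03+a01*b13+a02*b23+a03*b33;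
      a10*b00+a11*b10+a12*b20+a13*b30, a10*b01+a11*b11+a12*b21+a13*b31, a10*b02+a11*b12+a12*b22+a13*b32, a10*b03+a11*b13+a12*b23+a13*b33;
      a20*b00+a21*b10+a22*b20+a23*b30, a20*b01+a21*b11+a22*b21+a23*b31, a20*b02+a21*b12+a22*b22+a23*b32, a20*b03+a21*b13+a22*b23+a23*b33;
      a30*b00+a31*b10+a32*b20+a33*b30, a30*b01+a31*b11+a32*b21+a33*b31, a30*b02+a31*b12+a32*b22+a33*b32, a30*b03+a31*b13+a32*b23+a33*b33] := by
  ext i j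
  fin_cases i <;> fin_cases j <;> simp [Matrix.mul_apply, Fin.sum_univ_four]

set_option maxHeartbeats 4000000 in
lemma s16_decomp (X : sp2) : ∃ c : Fin 10 → ℝ,
    X = c 0 • fSp 0 + c 1 • fSp 1 + c 2 • fSp 2 + c 3 • fSp 3 + c 4 • fSp 4 + c 5 • fSp 5 + c 6 • fSp 6 + c 7 • fSp 7 + c 8 • fSp 8 + c 9 • fSp 9 := by
  obtain ⟨M, hM⟩ := X
  have hM' : Mᵀ * Jm + Jm * M = 0 := hM
  have h := fun i j => congrFun (congrFun hM' i) j
  simp only [Jm, Matrix.add_apply, Matrix.mul_apply, Fin.sum_univ_four, Matrix.transpose_apply,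
    Matrix.zero_apply] at h
  have h00 := h 0 0
  have h01 := h 0 1
  have h02 := h 0 2
  have h03 := h 0 3
  have h11 := h 1 1
  have h12 := h 1 2
  have h13 := h 1 3
  have h22 := h 2 2
  have h23 := h 2 3
  have h33 := h 3 3
  clear h
  simp at h00 h01 h02 h03 h11 h12 h13 h22 h23 h33
  refine ⟨![-(M 3 0) / 2, M 2 1, -(M 1 0), (M 1 1 - M 0 0) / 2, M 0 1, M 1 2, M 0 3 / 2, M 2 0,
    (M 1 1 + M 0 0) / 2, M 0 2], ?_⟩
  apply Subtype.ext
  ext i j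
  fin_cases i <;> fin_cases j <;>
    simp [s16_mats] <;> linarith

set_option maxHeartbeats 4000000 in
lemma s16_br8 : ⁅fSp 8, fSp 0⁆ = (-2 : ℝ) • fSp 0 ∧ ⁅fSp 8, fSp 1⁆ = (-2 : ℝ) • fSp 1 ∧
    ⁅fSp 8, fSp 2⁆ = 0 ∧ ⁅fSp 8, fSp 3⁆ = 0 ∧ ⁅fSp 8, fSp 4⁆ = 0 ∧
    ⁅fSp 8, fSp 5⁆ = (2 : ℝ) • fSp 5 ∧ ⁅fSp 8, fSp 6⁆ = (2 : ℝ) • fSp 6 ∧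
    ⁅fSp 8, fSp 7⁆ = (-2 : ℝ) • fSp 7 ∧ ⁅fSp 8, fSp 8⁆ = 0 ∧ ⁅fSp 8, fSp 9⁆ = (2 : ℝ) • fSp 9 := by
  refine ⟨?_, ?_, ?_, ?_, ?_, ?_, ?_, ?_, ?_, ?_⟩ <;>
  · apply Subtype.ext
    simp only [LieSubalgebra.coe_bracket, SetLike.val_smul, ZeroMemClass.coe_zero,
      s16_mats, Ring.lie_def]
    simp only [s16_mul4]
    norm_num [← Matrix.ext_iff, Fin.forall_fin_succ] <;> simp [funext_iff, Fin.forall_fin_succ]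

set_option maxHeartbeats 4000000 in
lemma s16_br9 : ⁅fSp 9, fSp 0⁆ = (2 : ℝ) • fSp 2 ∧ ⁅fSp 9, fSp 1⁆ = fSp 4 ∧
    ⁅fSp 9, fSp 2⁆ = (2 : ℝ) • fSp 5 ∧ ⁅fSp 9, fSp 3⁆ = 0 ∧ ⁅fSp 9, fSp 4⁆ = (-1 : ℝ) • fSp 6 ∧
    ⁅fSp 9, fSp 5⁆ = 0 ∧ ⁅fSp 9, fSp 6⁆ = 0 ∧
    ⁅fSp 9, fSp 7⁆ = fSp 8 ∧ ⁅fSp 9, fSp 8⁆ = (-2 : ℝ) • fSp 9 ∧ ⁅fSp 9, fSp 9⁆ = 0 := by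
  refine ⟨?_, ?_, ?_, ?_, ?_, ?_, ?_, ?_, ?_, ?_⟩ <;>
  · apply Subtype.ext
    simp only [LieSubalgebra.coe_bracket, SetLike.val_smul, ZeroMemClass.coe_zero,
      s16_mats, Ring.lie_def]
    simp only [s16_mul4]
    norm_num [← Matrix.ext_iff, Fin.forall_fin_succ] <;> simp [funext_iff, Fin.forall_fin_succ]

set_option maxHeartbeats 4000000 in
lemma s16_br7 : ⁅fSp 7, fSp 0⁆ = 0 ∧ ⁅fSp 7, fSp 1⁆ = 0 ∧
    ⁅fSp 7, fSp 2⁆ = fSp 0 ∧ ⁅fSp 7, fSp 3⁆ = 0 ∧ ⁅fSp 7, fSp 4⁆ = (2 : ℝ) • fSp 1 ∧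
    ⁅fSp 7, fSp 5⁆ = fSp 2 ∧ ⁅fSp 7, fSp 6⁆ = (-2 : ℝ) • fSp 4 ∧
    ⁅fSp 7, fSp 7⁆ = 0 ∧ ⁅fSp 7, fSp 8⁆ = (2 : ℝ) • fSp 7 ∧ ⁅fSp 7, fSp 9⁆ = (-1 : ℝ) • fSp 8 := by
  refine ⟨?_, ?_, ?_, ?_, ?_, ?_, ?_, ?_, ?_, ?_⟩ <;>
  · apply Subtype.ext
    simp only [LieSubalgebra.coe_bracket, SetLike.val_smul, ZeroMemClass.coe_zero,
      s16_mats, Ring.lie_def]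
    simp only [s16_mul4]
    norm_num [← Matrix.ext_iff, Fin.forall_fin_succ] <;> simp [funext_iff, Fin.forall_fin_succ]

lemma s16_mem (z : sp2) : (z : Matrix (Fin 4) (Fin 4) ℝ) ∈ spanS ↔
    ∃ a b c : ℝ, z = a • fSp 7 + b • fSp 8 + c • fSp 9 := by
  rw [spanS, Submodule.mem_span_triple]
  constructor
  · rintro ⟨a, b, c, h⟩
    exact ⟨a, b, c, Subtype.ext h.symm⟩
  · rintro ⟨a, b, c, h⟩
    exact ⟨a, b, c, by rw [h]; rfl⟩

/-- The explicit four-parameter expression. -/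
def s16form (ε : Fin 10 → (sp2 →ₗ[ℝ] ℝ)) (g33 g44 g55 g26 : ℝ) (X Y : sp2) : ℝ :=
  g33 * (sprod (ε 2) (ε 2) X Y - 2 * sprod (ε 0) (ε 5) X Y) +
  g44 * sprod (ε 3) (ε 3) X Y +
  g55 * (sprod (ε 4) (ε 4) X Y + 2 * sprod (ε 1) (ε 6) X Y) +
  2 * g26 * (-2 * sprod (ε 2) (ε 4) X Y + sprod (ε 1) (ε 5) X Y -
    4 * sprod (ε 0) (ε 6) X Y)

/-- `sprod` as a bilinear map. -/
def s16sp (α β : sp2 →ₗ[ℝ] ℝ) : sp2 →ₗ[ℝ] sp2 →ₗ[ℝ] ℝ :=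
  (1 / 2 : ℝ) • (α.smulRight β + β.smulRight α)

lemma s16sp_apply (α β : sp2 →ₗ[ℝ] ℝ) (X Y : sp2) : s16sp α β X Y = sprod α β X Y := by
  simp [s16sp, sprod]
  ring

/-- The parametrization. -/
def s16map (ε : Fin 10 → (sp2 →ₗ[ℝ] ℝ)) : (Fin 4 → ℝ) →ₗ[ℝ] (sp2 →ₗ[ℝ] sp2 →ₗ[ℝ] ℝ) :=
  (LinearMap.proj 0).smulRight (s16sp (ε 2) (ε 2) - (2 : ℝ) • s16sp (ε 0) (ε 5)) +
  (LinearMap.proj 1).smulRight (s16sp (ε 3) (ε 3)) +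
  (LinearMap.proj 2).smulRight (s16sp (ε 4) (ε 4) + (2 : ℝ) • s16sp (ε 1) (ε 6)) +
  (LinearMap.proj 3).smulRight ((2 : ℝ) • ((-2 : ℝ) • s16sp (ε 2) (ε 4) + s16sp (ε 1) (ε 5) -
    (4 : ℝ) • s16sp (ε 0) (ε 6)))

lemma s16map_apply (ε : Fin 10 → (sp2 →ₗ[ℝ] ℝ)) (g : Fin 4 → ℝ) (X Y : sp2) :
    s16map ε g X Y = s16form ε (g 0) (g 1) (g 2) (g 3) X Y := by
  simp [s16map, s16form, s16sp_apply]
  ring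

set_option maxHeartbeats 4000000 in
lemma s16_fwd (ε : Fin 10 → (sp2 →ₗ[ℝ] ℝ))
    (hdual : ∀ i j : Fin 10, ε i (fSp j) = if i = j then 1 else 0)
    (B : sp2 →ₗ[ℝ] sp2 →ₗ[ℝ] ℝ) (hs : ∀ x y : sp2, B x y = B y x)
    (h1 : ∀ x y : sp2, (x : Matrix (Fin 4) (Fin 4) ℝ) ∈ spanS → B x y = 0)
    (h2 : ∀ z x y : sp2, (z : Matrix (Fin 4) (Fin 4) ℝ) ∈ spanS →
          B ⁅z, x⁆ y + B x ⁅z, y⁆ = 0) :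
    ∃ g33 g44 g55 g26 : ℝ, ∀ X Y : sp2, B X Y = s16form ε g33 g44 g55 g26 X Y := by
  have m7 : (fSp 7 : Matrix (Fin 4) (Fin 4) ℝ) ∈ spanS := (s16_mem _).2 ⟨1, 0, 0, by simp⟩
  have m8 : (fSp 8 : Matrix (Fin 4) (Fin 4) ℝ) ∈ spanS := (s16_mem _).2 ⟨0, 1, 0, by simp⟩
  have m9 : (fSp 9 : Matrix (Fin 4) (Fin 4) ℝ) ∈ spanS := (s16_mem _).2 ⟨0, 0, 1, by simp⟩
  have l7 : ∀ y, B (fSp 7) y = 0 := fun y => h1 _ y m7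
  have l8 : ∀ y, B (fSp 8) y = 0 := fun y => h1 _ y m8
  have l9 : ∀ y, B (fSp 9) y = 0 := fun y => h1 _ y m9
  have r7 : ∀ y, B y (fSp 7) = 0 := fun y => by rw [hs]; exact l7 y
  have r8 : ∀ y, B y (fSp 8) = 0 := fun y => by rw [hs]; exact l8 y
  have r9 : ∀ y, B y (fSp 9) = 0 := fun y => by rw [hs]; exact l9 y
  obtain ⟨p0, p1, p2, p3, p4, p5, p6, -, -, -⟩ := s16_br8
  obtain ⟨q0, q1, q2, q3, q4, q5, q6, -, -, -⟩ := s16_br9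
  have e8 := fun i j => h2 (fSp 8) (fSp i) (fSp j) m8
  have e9 := fun i j => h2 (fSp 9) (fSp i) (fSp j) m9
  have tw : ∀ i j, B (fSp i) (fSp j) = 0 → B (fSp i) (fSp j) = 0 ∧ B (fSp j) (fSp i) = 0 :=
    fun i j h => ⟨h, by rw [hs]; exact h⟩
  have z00 := tw 0 0 (by
    have := e8 0 0
    simp only [p0, map_smul, map_zero, LinearMap.smul_apply, LinearMap.zero_apply, smul_eq_mul] at this
    linarith)
  have z01 := tw 0 1 (by
    have := e8 0 1
    simp only [p0, p1, map_smul, map_zero, LinearMap.smul_apply, LinearMap.zero_apply, smul_eq_mul] at this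
    linarith)
  have z02 := tw 0 2 (by
    have := e8 0 2
    simp only [p0, p2, map_smul, map_zero, LinearMap.smul_apply, LinearMap.zero_apply, smul_eq_mul] at this
    linarith)
  have z03 := tw 0 3 (by
    have := e8 0 3
    simp only [p0, p3, map_smul, map_zero, LinearMap.smul_apply, LinearMap.zero_apply, smul_eq_mul] at this
    linarith)
  have z04 := tw 0 4 (by
    have := e8 0 4
    simp only [p0, p4, map_smul, map_zero, LinearMap.smul_apply, LinearMap.zero_apply, smul_eq_mul] at this
    linarith)
  have z11 := tw 1 1 (by
    have := e8 1 1
    simp only [p1, map_smul, map_zero, LinearMap.smul_apply, LinearMap.zero_apply, smul_eq_mul] at this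
    linarith)
  have z12 := tw 1 2 (by
    have := e8 1 2
    simp only [p1, p2, map_smul, map_zero, LinearMap.smul_apply, LinearMap.zero_apply, smul_eq_mul] at this
    linarith)
  have z13 := tw 1 3 (by
    have := e8 1 3
    simp only [p1, p3, map_smul, map_zero, LinearMap.smul_apply, LinearMap.zero_apply, smul_eq_mul] at this
    linarith)
  have z14 := tw 1 4 (by
    have := e8 1 4
    simp only [p1, p4, map_smul, map_zero, LinearMap.smul_apply, LinearMap.zero_apply, smul_eq_mul] at this
    linarith)
  have z25 := tw 2 5 (by
    have := e8 2 5
    simp only [p2, p5, map_smul, map_zero, LinearMap.smul_apply, LinearMap.zero_apply, smul_eq_mul] at this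
    linarith)
  have z26 := tw 2 6 (by
    have := e8 2 6
    simp only [p2, p6, map_smul, map_zero, LinearMap.smul_apply, LinearMap.zero_apply, smul_eq_mul] at this
    linarith)
  have z35 := tw 3 5 (by
    have := e8 3 5
    simp only [p3, p5, map_smul, map_zero, LinearMap.smul_apply, LinearMap.zero_apply, smul_eq_mul] at this
    linarith)
  have z36 := tw 3 6 (by
    have := e8 3 6
    simp only [p3, p6, map_smul, map_zero, LinearMap.smul_apply, LinearMap.zero_apply, smul_eq_mul] at this
    linarith)
  have z45 := tw 4 5 (by
    have := e8 4 5
    simp only [p4, p5, map_smul, map_zero, LinearMap.smul_apply, LinearMap.zero_apply, smul_eq_mul] at this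
    linarith)
  have z46 := tw 4 6 (by
    have := e8 4 6
    simp only [p4, p6, map_smul, map_zero, LinearMap.smul_apply, LinearMap.zero_apply, smul_eq_mul] at this
    linarith)
  have z55 := tw 5 5 (by
    have := e8 5 5
    simp only [p5, map_smul, map_zero, LinearMap.smul_apply, LinearMap.zero_apply, smul_eq_mul] at this
    linarith)
  have z56 := tw 5 6 (by
    have := e8 5 6
    simp only [p5, p6, map_smul, map_zero, LinearMap.smul_apply, LinearMap.zero_apply, smul_eq_mul] at this
    linarith)
  have z66 := tw 6 6 (by
    have := e8 6 6
    simp only [p6, map_smul, map_zero, LinearMap.smul_apply, LinearMap.zero_apply, smul_eq_mul] at this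
    linarith)
  have z23 := tw 2 3 (by
    have := e9 0 3
    simp only [q0, q3, map_smul, map_zero, LinearMap.smul_apply, LinearMap.zero_apply, smul_eq_mul] at this
    have := hs (fSp 3) (fSp 4)
    linarith)
  have z34 := tw 3 4 (by
    have := e9 1 3
    simp only [q1, q3, map_smul, map_zero, LinearMap.smul_apply, LinearMap.zero_apply, smul_eq_mul] at this
    have := hs (fSp 3) (fSp 4)
    linarith)
  have k05 : B (fSp 0) (fSp 5) = -B (fSp 2) (fSp 2) := by
    have := e9 0 2
    simp only [q0, q2, map_smul, map_zero, LinearMap.smul_apply, LinearMap.zero_apply, smul_eq_mul] at this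
    have := hs (fSp 4) (fSp 2)
    linarith
  have k06 : B (fSp 0) (fSp 6) = 2 * B (fSp 2) (fSp 4) := by
    have := e9 0 4
    simp only [q0, q4, map_smul, map_zero, LinearMap.smul_apply, LinearMap.zero_apply, smul_eq_mul] at this
    have := hs (fSp 4) (fSp 2)
    linarith
  have k16 : B (fSp 1) (fSp 6) = B (fSp 4) (fSp 4) := by
    have := e9 1 4
    simp only [q1, q4, map_smul, map_zero, LinearMap.smul_apply, LinearMap.zero_apply, smul_eq_mul] at this
    have := hs (fSp 4) (fSp 2)
    linarith
  have k24 : B (fSp 2) (fSp 4) = -2 * B (fSp 1) (fSp 5) := by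
    have := e9 1 2
    simp only [q1, q2, map_smul, map_zero, LinearMap.smul_apply, LinearMap.zero_apply, smul_eq_mul] at this
    have := hs (fSp 4) (fSp 2)
    linarith
  have s05 := hs (fSp 5) (fSp 0)
  have s06 := hs (fSp 6) (fSp 0)
  have s16 := hs (fSp 6) (fSp 1)
  have s24 := hs (fSp 4) (fSp 2)
  have s15 := hs (fSp 5) (fSp 1)
  refine ⟨B (fSp 2) (fSp 2), B (fSp 3) (fSp 3), B (fSp 4) (fSp 4), B (fSp 1) (fSp 5), ?_⟩
  intro X Y
  obtain ⟨c, rfl⟩ := s16_decomp X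
  obtain ⟨d, rfl⟩ := s16_decomp Y
  simp only [s16form, sprod, map_add, map_smul, hdual, LinearMap.add_apply, LinearMap.smul_apply,
    smul_eq_mul, l7, l8, l9, r7, r8, r9, z00, z01, z02, z03, z04, z11, z12, z13, z14, z25, z26, z35, z36, z45, z46, z55, z56, z66, z23, z34, s05, s06, s16, s24, s15, k05, k06, k16, k24]
  simp
  ring

set_option maxHeartbeats 1000000 in
lemma s16_bwd (ε : Fin 10 → (sp2 →ₗ[ℝ] ℝ))
    (hdual : ∀ i j : Fin 10, ε i (fSp j) = if i = j then 1 else 0)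
    (B : sp2 →ₗ[ℝ] sp2 →ₗ[ℝ] ℝ) (g33 g44 g55 g26 : ℝ)
    (hB : ∀ X Y : sp2, B X Y = s16form ε g33 g44 g55 g26 X Y) :
    (∀ x y : sp2, B x y = B y x) ∧
    (∀ x y : sp2, (x : Matrix (Fin 4) (Fin 4) ℝ) ∈ spanS → B x y = 0) ∧
    (∀ z x y : sp2, (z : Matrix (Fin 4) (Fin 4) ℝ) ∈ spanS →
          B ⁅z, x⁆ y + B x ⁅z, y⁆ = 0) := by
  refine ⟨?_, ?_, ?_⟩
  · intro x y
    simp only [hB, s16form, sprod]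
    ring
  · intro x y hx
    obtain ⟨a, b, c, rfl⟩ := (s16_mem x).1 hx
    simp [hB, s16form, sprod, hdual]
  · intro z x y hz
    obtain ⟨a, b, c, rfl⟩ := (s16_mem z).1 hz
    have key : ∀ w : sp2,
        ε 0 ⁅a • fSp 7 + b • fSp 8 + c • fSp 9, w⁆ = a * ε 2 w - 2 * b * ε 0 w ∧
        ε 1 ⁅a • fSp 7 + b • fSp 8 + c • fSp 9, w⁆ = 2 * a * ε 4 w - 2 * b * ε 1 w ∧
        ε 2 ⁅a • fSp 7 + b • fSp 8 + c • fSp 9, w⁆ = a * ε 5 w + 2 * c * ε 0 w ∧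
        ε 3 ⁅a • fSp 7 + b • fSp 8 + c • fSp 9, w⁆ = 0 ∧
        ε 4 ⁅a • fSp 7 + b • fSp 8 + c • fSp 9, w⁆ = -2 * a * ε 6 w + c * ε 1 w ∧
        ε 5 ⁅a • fSp 7 + b • fSp 8 + c • fSp 9, w⁆ = 2 * b * ε 5 w + 2 * c * ε 2 w ∧
        ε 6 ⁅a • fSp 7 + b • fSp 8 + c • fSp 9, w⁆ = 2 * b * ε 6 w - c * ε 4 w := by
      intro w
      obtain ⟨d, rfl⟩ := s16_decomp w
      simp only [add_lie, lie_add, smul_lie, lie_smul, s16_br7, s16_br8, s16_br9, map_add,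
        map_smul, map_zero, smul_zero, hdual, smul_eq_mul]
      refine ⟨?_, ?_, ?_, ?_, ?_, ?_, ?_⟩ <;> simp <;> ring
    simp only [hB, s16form, sprod, key]
    ring

theorem statement16 (ε : Fin 10 → (sp2 →ₗ[ℝ] ℝ))
    (hdual : ∀ i j : Fin 10, ε i (fSp j) = if i = j then 1 else 0) :
    -- the equivalence, for any symmetric bilinear form B on 𝔤
    (∀ B : sp2 →ₗ[ℝ] sp2 →ₗ[ℝ] ℝ, (∀ x y : sp2, B x y = B y x) →
      (((∀ x y : sp2, (x : Matrix (Fin 4) (Fin 4) ℝ) ∈ spanS → B x y = 0) ∧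
        (∀ z x y : sp2, (z : Matrix (Fin 4) (Fin 4) ℝ) ∈ spanS →
          B ⁅z, x⁆ y + B x ⁅z, y⁆ = 0)) ↔
        (∃ g33 g44 g55 g26 : ℝ, ∀ X Y : sp2,
          B X Y =
            g33 * (sprod (ε 2) (ε 2) X Y - 2 * sprod (ε 0) (ε 5) X Y) +
            g44 * sprod (ε 3) (ε 3) X Y +
            g55 * (sprod (ε 4) (ε 4) X Y + 2 * sprod (ε 1) (ε 6) X Y) +
            2 * g26 * (-2 * sprod (ε 2) (ε 4) X Y + sprod (ε 1) (ε 5) X Y -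
              4 * sprod (ε 0) (ε 6) X Y)))) ∧
    -- the space of such forms is 4-dimensional
    (∃ W : Submodule ℝ (sp2 →ₗ[ℝ] sp2 →ₗ[ℝ] ℝ),
      (W : Set (sp2 →ₗ[ℝ] sp2 →ₗ[ℝ] ℝ)) =
        {B | (∀ x y : sp2, B x y = B y x) ∧
          (∀ x y : sp2, (x : Matrix (Fin 4) (Fin 4) ℝ) ∈ spanS → B x y = 0) ∧
          (∀ z x y : sp2, (z : Matrix (Fin 4) (Fin 4) ℝ) ∈ spanS →
            B ⁅z, x⁆ y + B x ⁅z, y⁆ = 0)} ∧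
      Module.finrank ℝ W = 4) := by
  refine ⟨?_, ?_⟩
  · intro B hs
    constructor
    · rintro ⟨h1, h2⟩
      exact s16_fwd ε hdual B hs h1 h2
    · rintro ⟨a, b, c, d, h⟩
      exact (s16_bwd ε hdual B a b c d h).2
  · refine ⟨LinearMap.range (s16map ε), ?_, ?_⟩
    · ext B
      simp only [SetLike.mem_coe, LinearMap.mem_range, Set.mem_setOf_eq]
      constructor
      · rintro ⟨g, rfl⟩
        exact s16_bwd ε hdual _ _ _ _ _ (s16map_apply ε g)
      · rintro ⟨hs, h1, h2⟩
        obtain ⟨a, b, c, d, h⟩ := s16_fwd ε hdual B hs h1 h2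
        refine ⟨![a, b, c, d], ?_⟩
        ext X Y : 2
        rw [s16map_apply, h]
        rfl
    · rw [LinearMap.finrank_range_of_inj]
      · simp
      · rw [injective_iff_map_eq_zero]
        intro g hg
        have h : ∀ X Y, s16form ε (g 0) (g 1) (g 2) (g 3) X Y = 0 := by
          intro X Y
          rw [← s16map_apply, hg]
          rfl
        have a0 := h (fSp 2) (fSp 2)
        have a1 := h (fSp 3) (fSp 3)
        have a2 := h (fSp 4) (fSp 4)
        have a3 := h (fSp 1) (fSp 5)
        simp [s16form, sprod, hdual] at a0 a1 a2 a3
        ext i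
        fin_cases i <;> simp [a0, a1, a2, a3]
end
end
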